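/- Suppose (Z^n)_{n∈ℕ} is a sequence of nonnegative càdlàg P-supermartingales indexed by [0,T] such that Z^n_0 ≤ 1 almost surely for every n, and Z^n_T → 1 in P-probability as n → ∞. Then for every ε ∈ (0,∞), lim_{n→∞} P[sup_{t∈[0,T]} Z^n_t > 1 + ε] = 0. -/

import Mathlib

open MeasureTheory Filter Set Topology
open scoped ENNReal

noncomputable section

namespace WPS

variable {Ω : Type*}

/-- A real function is càdlàg on `[0,T]`: right-continuous on `[0,T)` and
with left limits on `(0,T]`. -/
def CadlagOn (T : ℝ) (f : ℝ → ℝ) : Prop :=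
  (∀ t ∈ Set.Ico (0:ℝ) T, ContinuousWithinAt f (Set.Ici t) t) ∧
  (∀ t ∈ Set.Ioc (0:ℝ) T, ∃ l : ℝ, Filter.Tendsto f (nhdsWithin t (Set.Iio t)) (nhds l))

variable {m0 : MeasurableSpace Ω}

/-- A nonnegative càdlàg adapted process on the time interval `[0,T]`. -/
structure IsProcess (P : Measure Ω) (ℱ : Filtration ℝ m0) (T : ℝ) (X : ℝ → Ω → ℝ) : Prop where
  adapted : ∀ t ∈ Set.Icc (0:ℝ) T, Measurable[ℱ t] (X t)
  cadlag : ∀ᵐ ω ∂P, CadlagOn T (fun t => X t ω)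
  nonneg : ∀ᵐ ω ∂P, ∀ t ∈ Set.Icc (0:ℝ) T, 0 ≤ X t ω

/-- A process is strictly positive if a.s. `inf_{t ∈ [0,T]} X_t > 0`. -/
def StrictlyPos (P : Measure Ω) (T : ℝ) (X : ℝ → Ω → ℝ) : Prop :=
  ∀ᵐ ω ∂P, 0 < ⨅ t : Set.Icc (0:ℝ) T, X t ω

/-- A wealth-process set: a set of nonnegative càdlàg adapted processes with unit
initial value, containing a strictly positive element, and fork-convex. -/
structure IsWealthProcessSet (P : Measure Ω) (ℱ : Filtration ℝ m0) (T : ℝ)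
    (𝒳 : Set (ℝ → Ω → ℝ)) : Prop where
  proc : ∀ X ∈ 𝒳, IsProcess P ℱ T X
  init_one : ∀ X ∈ 𝒳, ∀ᵐ ω ∂P, X 0 ω = 1
  exists_pos : ∃ X ∈ 𝒳, StrictlyPos P T X
  forkConvex : ∀ s ∈ Set.Icc (0:ℝ) T, ∀ X ∈ 𝒳, ∀ X' ∈ 𝒳, ∀ X'' ∈ 𝒳,
    StrictlyPos P T X' → StrictlyPos P T X'' →
    ∀ α : Ω → ℝ, Measurable[ℱ s] α → (∀ ω, α ω ∈ Set.Icc (0:ℝ) 1) →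
      (fun t ω => if t < s then X t ω
        else α ω * (X s ω / X' s ω) * X' t ω
          + (1 - α ω) * (X s ω / X'' s ω) * X'' t ω) ∈ 𝒳

/-- `ξ` is an arbitrage of the first kind for the wealth-process set `𝒳`. -/
def IsArbitrageOfFirstKind (P : Measure Ω) (T : ℝ) (𝒳 : Set (ℝ → Ω → ℝ))
    (ξ : Ω → ℝ) : Prop :=
  Measurable ξ ∧ (∀ᵐ ω ∂P, 0 ≤ ξ ω) ∧ P {ω | 0 < ξ ω} ≠ 0 ∧
    ∀ x : ℝ, 0 < x → ∃ X ∈ 𝒳, ∀ᵐ ω ∂P, ξ ω ≤ x * X T ω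

/-- Condition NA₁: there is no arbitrage of the first kind. -/
def NA1 (P : Measure Ω) (T : ℝ) (𝒳 : Set (ℝ → Ω → ℝ)) : Prop :=
  ¬ ∃ ξ : Ω → ℝ, IsArbitrageOfFirstKind P T 𝒳 ξ

/-- `Z` is a `Q`-supermartingale on `[0,T]` with respect to the filtration `ℱ`. -/
def SupermartingaleOn (Q : Measure Ω) (ℱ : Filtration ℝ m0) (T : ℝ)
    (Z : ℝ → Ω → ℝ) : Prop :=
  (∀ t ∈ Set.Icc (0:ℝ) T, Measurable[ℱ t] (Z t)) ∧
  (∀ t ∈ Set.Icc (0:ℝ) T, Integrable (Z t) Q) ∧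
  ∀ s t : ℝ, 0 ≤ s → s ≤ t → t ≤ T → ∀ᵐ ω ∂Q, (Q[Z t | ℱ s]) ω ≤ Z s ω

/-- `Z` is a `Q`-martingale on `[0,T]` with respect to the filtration `ℱ`. -/
def MartingaleOn (Q : Measure Ω) (ℱ : Filtration ℝ m0) (T : ℝ)
    (Z : ℝ → Ω → ℝ) : Prop :=
  (∀ t ∈ Set.Icc (0:ℝ) T, Measurable[ℱ t] (Z t)) ∧
  (∀ t ∈ Set.Icc (0:ℝ) T, Integrable (Z t) Q) ∧
  ∀ s t : ℝ, 0 ≤ s → s ≤ t → t ≤ T → (Q[Z t | ℱ s]) =ᵐ[Q] Z s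

/-- The sequence `(Xⁿ)` of nonnegative processes Fatou-converges to `X`:
there is a countable dense set `𝕋 ⊆ [0,T]` containing `T` such that a.s., for all
`t ∈ [0,T]`, `X_t` equals both the liminf of liminfs and the limsup of limsups of
`Xⁿ_s` as `𝕋 ∋ s ↓ t` (computed in the extended reals). -/
def FatouLim (P : Measure Ω) (T : ℝ) (Xn : ℕ → ℝ → Ω → ℝ) (X : ℝ → Ω → ℝ) : Prop :=
  ∃ 𝕋 : Set ℝ, 𝕋.Countable ∧ 𝕋 ⊆ Set.Icc (0:ℝ) T ∧ T ∈ 𝕋 ∧ Set.Icc (0:ℝ) T ⊆ closure 𝕋 ∧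
    ∀ᵐ ω ∂P, ∀ t ∈ Set.Icc (0:ℝ) T,
      ((X t ω : EReal) =
        Filter.liminf (fun s : ℝ =>
          Filter.liminf (fun n : ℕ => (Xn n s ω : EReal)) Filter.atTop)
          (nhdsWithin t (𝕋 ∩ Set.Ici t))) ∧
      ((X t ω : EReal) =
        Filter.limsup (fun s : ℝ =>
          Filter.limsup (fun n : ℕ => (Xn n s ω : EReal)) Filter.atTop)
          (nhdsWithin t (𝕋 ∩ Set.Ici t)))

/-- The Fatou-closure of `𝒳`: all nonnegative càdlàg adapted processes that are
Fatou-limits of `𝒳`-valued sequences. -/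
def FatouClosure (P : Measure Ω) (ℱ : Filtration ℝ m0) (T : ℝ)
    (𝒳 : Set (ℝ → Ω → ℝ)) : Set (ℝ → Ω → ℝ) :=
  {X | IsProcess P ℱ T X ∧
    ∃ Xn : ℕ → ℝ → Ω → ℝ, (∀ n, Xn n ∈ 𝒳) ∧ FatouLim P T Xn X}

/-- The process-polar `𝒳°` of `𝒳`. -/
def processPolar (P : Measure Ω) (ℱ : Filtration ℝ m0) (T : ℝ)
    (𝒳 : Set (ℝ → Ω → ℝ)) : Set (ℝ → Ω → ℝ) :=
  {Y | IsProcess P ℱ T Y ∧ (∀ᵐ ω ∂P, Y 0 ω ≤ 1) ∧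
    ∀ X ∈ 𝒳, SupermartingaleOn P ℱ T (fun t ω => Y t ω * X t ω)}

/-- The process-bipolar `𝒳°°` of `𝒳`. -/
def processBipolar (P : Measure Ω) (ℱ : Filtration ℝ m0) (T : ℝ)
    (𝒳 : Set (ℝ → Ω → ℝ)) : Set (ℝ → Ω → ℝ) :=
  {X | IsProcess P ℱ T X ∧ (∀ᵐ ω ∂P, X 0 ω ≤ 1) ∧
    ∀ Y ∈ processPolar P ℱ T 𝒳, SupermartingaleOn P ℱ T (fun t ω => Y t ω * X t ω)}

/-- The family `{X_t : X ∈ 𝒳, t ∈ [0,T]}` is bounded in probability. -/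
def FamilyBddInProb (P : Measure Ω) (T : ℝ) (𝒳 : Set (ℝ → Ω → ℝ)) : Prop :=
  Filter.Tendsto (fun l : ℝ => ⨆ X ∈ 𝒳, ⨆ t ∈ Set.Icc (0:ℝ) T, P {ω | l < X t ω})
    Filter.atTop (nhds 0)

/-- Uniform (on `[0,T]`) convergence in probability of `(Xⁿ)` to `X`. -/
def UnifTendstoInProb (P : Measure Ω) (T : ℝ) (Xn : ℕ → ℝ → Ω → ℝ)
    (X : ℝ → Ω → ℝ) : Prop :=
  ∀ ε : ℝ, 0 < ε →
    Filter.Tendsto (fun n => P {ω | ∃ t ∈ Set.Icc (0:ℝ) T, ε ≤ |Xn n t ω - X t ω|})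
      Filter.atTop (nhds 0)

/-- The positive part of an extended real, as an extended nonnegative real. -/
def erealPos (x : EReal) : ℝ≥0∞ := if x = ⊤ then ⊤ else ENNReal.ofReal x.toReal

/-- The utility function extended to `0` by `U(0) := lim_{x ↓ 0} U(x)` (an extended real). -/
def extUtil (U : ℝ → ℝ) (w : ℝ) : EReal :=
  if 0 < w then (U w : EReal)
  else Filter.liminf (fun x : ℝ => (U x : EReal)) (nhdsWithin 0 (Set.Ioi 0))

/-- The expected utility `E[U(W)]` as an extended real, with the convention that it
equals `−∞` whenever `E[min(0, U(W))] = −∞`. -/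
def expUtility (P : Measure Ω) (U : ℝ → ℝ) (W : Ω → ℝ) : EReal :=
  if (∫⁻ ω, erealPos (-(extUtil U (W ω))) ∂P) = ⊤ then ⊥
  else ((∫⁻ ω, erealPos (extUtil U (W ω)) ∂P : ℝ≥0∞) : EReal)
    - ((∫⁻ ω, erealPos (-(extUtil U (W ω))) ∂P : ℝ≥0∞) : EReal)

/-!
Stop a supermartingale `Z` on `[0,T]` with `E[Z_0] ≤ 1` when it first exceeds `1 + ε`, and let `A`
be the event that this happens. Optional stopping gives
`(1 + ε) P[A] + E[Z_T; Aᶜ] ≤ E[Z_0] ≤ 1`, that is, `ε P[A] ≤ E[1 - Z_T; Aᶜ] ≤ E[(1 - Z_T)⁺]`.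
When `Z_T` is nonnegative, `(1 - Z_T)⁺` is bounded by `1`, so the right-hand side tends to zero as
soon as `Z_T → 1` in probability. Only finitely many times are needed for the optional stopping
step: the bound does not depend on them, so it passes to a countable dense set of times containing
`T`, and right-continuity of the paths extends it to all of `[0,T]`.
-/

section MeasureBounds

variable {μ : Measure Ω}

lemma measure_biUnion_le_of_forall_finset {ι : Type*} {S : Set ι} (hS : S.Countable)
    {A : ι → Set Ω} {C : ℝ≥0∞} (hC : ∀ F : Finset ι, ↑F ⊆ S → μ (⋃ i ∈ F, A i) ≤ C) :
    μ (⋃ i ∈ S, A i) ≤ C := by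
  have : Countable S := hS.to_subtype
  have directed : Directed (· ⊆ ·) fun F : Finset S => ⋃ i ∈ F, A i :=
    Monotone.directed_le fun _ _ hFG => biUnion_subset_biUnion_left hFG
  rw [biUnion_eq_iUnion, iUnion_eq_iUnion_finset, directed.measure_iUnion]
  refine iSup_le fun F => ?_
  classical
  simpa only [Finset.set_biUnion_finset_image] using
    hC (F.image (↑)) (by simpa only [Finset.coe_image] using Subtype.coe_image_subset S F)

lemma mul_measureReal_union_add_setIntegral_compl_le [IsFiniteMeasure μ] {A D : Set Ω}
    (hA : MeasurableSet A) (hD : MeasurableSet D) {g : Ω → ℝ} (hg : Integrable g μ) {c : ℝ}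
    (hc : ∀ ω ∈ D, c ≤ g ω) :
    c * μ.real (A ∪ D) + ∫ ω in (A ∪ D)ᶜ, g ω ∂μ ≤ c * μ.real A + ∫ ω in Aᶜ, g ω ∂μ := by
  have hDA : MeasurableSet (D \ A) := hD.diff hA
  have integral_split :
      ∫ ω in Aᶜ, g ω ∂μ = ∫ ω in D \ A, g ω ∂μ + ∫ ω in (A ∪ D)ᶜ, g ω ∂μ := by
    rw [← integral_inter_add_sdiff hD hg.integrableOn, inter_comm, ← sdiff_eq, sdiff_eq Aᶜ,
      ← compl_union]
  have measure_split : μ.real (A ∪ D) = μ.real A + μ.real (D \ A) := by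
    rw [← union_sdiff_self, measureReal_union disjoint_sdiff_right hDA]
  have lower_bound : c * μ.real (D \ A) ≤ ∫ ω in D \ A, g ω ∂μ :=
    setIntegral_ge_of_const_le_real hDA (measure_ne_top _ _) (fun ω hω => hc ω hω.1)
      hg.integrableOn
  rw [integral_split, measure_split]
  linarith

lemma ofReal_integral_le_lintegral_ofReal (g : Ω → ℝ) :
    ENNReal.ofReal (∫ ω, g ω ∂μ) ≤ ∫⁻ ω, ENNReal.ofReal (g ω) ∂μ := by
  by_cases hg : Integrable g μ
  · rw [integral_eq_lintegral_pos_part_sub_lintegral_neg_part hg]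
    exact (ENNReal.ofReal_le_ofReal (sub_le_self _ ENNReal.toReal_nonneg)).trans
      ENNReal.ofReal_toReal_le
  · simp [integral_undef hg]

lemma lintegral_ofReal_sub_le {g : Ω → ℝ} (hg : ∀ᵐ ω ∂μ, 0 ≤ g ω) (K δ : ℝ) :
    ∫⁻ ω, ENNReal.ofReal (K - g ω) ∂μ
      ≤ ENNReal.ofReal δ * μ univ + ENNReal.ofReal K * μ {ω | δ ≤ dist (g ω) K} := by
  set B := {ω | δ ≤ dist (g ω) K}
  have pointwise : ∀ᵐ ω ∂μ, ENNReal.ofReal (K - g ω)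
      ≤ ENNReal.ofReal δ + B.indicator (fun _ => ENNReal.ofReal K) ω := by
    filter_upwards [hg] with ω hω
    by_cases hB : ω ∈ B
    · rw [indicator_of_mem hB]
      exact le_add_left (ENNReal.ofReal_le_ofReal (by linarith))
    · have hclose : |g ω - K| < δ := not_le.1 hB
      rw [indicator_of_notMem hB, add_zero]
      exact ENNReal.ofReal_le_ofReal (by linarith [(abs_lt.1 hclose).1])
  calc ∫⁻ ω, ENNReal.ofReal (K - g ω) ∂μ
      ≤ ∫⁻ ω, ENNReal.ofReal δ + B.indicator (fun _ => ENNReal.ofReal K) ω ∂μ :=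
        lintegral_mono_ae pointwise
    _ = ENNReal.ofReal δ * μ univ + ∫⁻ ω, B.indicator (fun _ => ENNReal.ofReal K) ω ∂μ := by
        rw [lintegral_add_left measurable_const, lintegral_const]
    _ ≤ ENNReal.ofReal δ * μ univ + ENNReal.ofReal K * μ B := by
        gcongr
        exact lintegral_indicator_const_le _ _

lemma tendsto_lintegral_ofReal_sub_of_tendstoInMeasure [IsFiniteMeasure μ] {κ : Type*}
    {l : Filter κ} {g : κ → Ω → ℝ} {K : ℝ} (hg : ∀ n, ∀ᵐ ω ∂μ, 0 ≤ g n ω)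
    (hgK : TendstoInMeasure μ g l fun _ => K) :
    Tendsto (fun n => ∫⁻ ω, ENNReal.ofReal (K - g n ω) ∂μ) l (𝓝 0) := by
  refine tendsto_order.2 ⟨fun _ h => absurd h not_lt_zero, fun η hη => ?_⟩
  have small_const : Tendsto (fun δ : ℝ => ENNReal.ofReal δ * μ univ) (𝓝[>] 0) (𝓝 0) := by
    simpa using ENNReal.Tendsto.mul_const
      (ENNReal.tendsto_ofReal (tendsto_id.mono_left (nhdsWithin_le_nhds (a := (0 : ℝ)))))
      (Or.inr (measure_ne_top μ univ))
  obtain ⟨δ, hδη, hδ⟩ :=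
    ((small_const.eventually_lt_const hη).and self_mem_nhdsWithin).exists
  have bound_tendsto : Tendsto
      (fun n => ENNReal.ofReal δ * μ univ + ENNReal.ofReal K * μ {ω | δ ≤ dist (g n ω) K}) l
      (𝓝 (ENNReal.ofReal δ * μ univ)) := by
    simpa using (ENNReal.Tendsto.const_mul (tendstoInMeasure_iff_dist.1 hgK δ hδ)
      (Or.inr ENNReal.ofReal_ne_top)).const_add (ENNReal.ofReal δ * μ univ)
  filter_upwards [bound_tendsto.eventually_lt_const hδη] with n hn
  exact (lintegral_ofReal_sub_le (hg n) K δ).trans_lt hn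

end MeasureBounds

section RightRegularPaths

variable {ι : Type*} [LinearOrder ι] [TopologicalSpace ι] [OrderTopology ι] [DenselyOrdered ι]

lemma exists_mem_Ioo_lt_of_lowerSemicontinuousWithinAt {β : Type*} [Preorder β] {D : Set ι}
    (hD : Dense D) {x : ι → β} {t b : ι} (htb : t < b)
    (hx : LowerSemicontinuousWithinAt x (Ioi t) t) {c : β} (hc : c < x t) :
    ∃ s ∈ D, s ∈ Ioo t b ∧ c < x s := by
  obtain ⟨u, htu, hu⟩ := (mem_nhdsGT_iff_exists_Ioo_subset' htb).1 (hx c hc)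
  obtain ⟨s, hsD, hts, hsu⟩ := hD.exists_between (lt_min htu htb)
  exact ⟨s, hsD, ⟨hts, hsu.trans_le (min_le_right _ _)⟩, hu ⟨hts, hsu.trans_le (min_le_left _ _)⟩⟩

lemma exists_mem_insert_dense_lt_of_exists_mem_Icc {β : Type*} [Preorder β] {D : Set ι}
    (hD : Dense D) {x : ι → β} {a b : ι}
    (hx : ∀ t ∈ Ico a b, LowerSemicontinuousWithinAt x (Ioi t) t) {c : β}
    (hc : ∃ t ∈ Icc a b, c < x t) :
    ∃ s ∈ insert b (D ∩ Icc a b), c < x s := by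
  obtain ⟨t, ⟨hat, htb⟩, hct⟩ := hc
  rcases htb.eq_or_lt with rfl | htb
  · exact ⟨t, mem_insert _ _, hct⟩
  · obtain ⟨s, hsD, ⟨hts, hsb⟩, hcs⟩ :=
      exists_mem_Ioo_lt_of_lowerSemicontinuousWithinAt hD htb (hx t ⟨hat, htb⟩) hct
    exact ⟨s, mem_insert_of_mem _ ⟨hsD, hat.trans hts.le, hsb.le⟩, hcs⟩

end RightRegularPaths

section MaximalInequality

variable {ι : Type*} [LinearOrder ι] {μ : Measure Ω} [IsFiniteMeasure μ] {ℱ : Filtration ι m0}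
  {f : ι → Ω → ℝ} {a b : ι} {c K : ℝ}

lemma measurableSet_biUnion_finset_lt (hf : StronglyAdapted ℱ f) {F : Finset ι}
    (hF : ∀ i ∈ F, i ≤ b) (c : ℝ) : MeasurableSet[ℱ b] (⋃ i ∈ F, {ω | c < f i ω}) :=
  F.measurableSet_biUnion fun i hi => ℱ.mono (hF i hi) _ ((hf i).measurable measurableSet_Ioi)

theorem supermartingale_maximal_ineq_finset (hf : Supermartingale f ℱ μ) (hab : a ≤ b)
    {F : Finset ι} (hF : ∀ i ∈ F, i ∈ Icc a b) (c : ℝ) :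
    c * μ.real (⋃ i ∈ F, {ω | c < f i ω}) + ∫ ω in (⋃ i ∈ F, {ω | c < f i ω})ᶜ, f b ω ∂μ
      ≤ ∫ ω, f a ω ∂μ := by
  induction F using Finset.induction_on_max generalizing b with
  | empty => simpa using hf.setIntegral_le hab MeasurableSet.univ
  | insert j F hFj ih =>
    obtain ⟨haj, hjb⟩ := hF j (Finset.mem_insert_self j F)
    have hinsert : ∀ i ∈ insert j F, i ≤ j :=
      Finset.forall_mem_insert .. |>.2 ⟨le_rfl, fun i hi => (hFj i hi).le⟩
    have hFaj : ∀ i ∈ F, i ∈ Icc a j := fun i hi =>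
      ⟨(hF i (Finset.mem_insert_of_mem hi)).1, (hFj i hi).le⟩
    have hmeas := measurableSet_biUnion_finset_lt hf.stronglyAdapted hinsert c
    have hmeasF := measurableSet_biUnion_finset_lt hf.stronglyAdapted (fun i hi => (hFaj i hi).2) c
    have hmeasj : MeasurableSet {ω | c < f j ω} :=
      ℱ.le j _ ((hf.stronglyMeasurable j).measurable measurableSet_Ioi)
    have decrease := hf.setIntegral_le hjb hmeas.compl
    have stopping := mul_measureReal_union_add_setIntegral_compl_le (ℱ.le j _ hmeasF) hmeasj
      (hf.integrable j) (c := c) fun _ hω => le_of_lt hω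
    rw [Finset.set_biUnion_insert, union_comm] at decrease ⊢
    linarith [ih haj hFaj]

theorem supermartingale_measure_biUnion_finset_lt_le (hf : Supermartingale f ℱ μ)
    (hfa : ∫ ω, f a ω ∂μ ≤ K * μ.real univ) (hKc : K < c) (hab : a ≤ b) {F : Finset ι}
    (hF : ∀ i ∈ F, i ∈ Icc a b) :
    μ (⋃ i ∈ F, {ω | c < f i ω})
      ≤ (∫⁻ ω, ENNReal.ofReal (K - f b ω) ∂μ) / ENNReal.ofReal (c - K) := by
  set A := ⋃ i ∈ F, {ω | c < f i ω}
  have hA : MeasurableSet A :=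
    ℱ.le b _ (measurableSet_biUnion_finset_lt hf.stronglyAdapted (fun i hi => (hF i hi).2) c)
  have integral_compl :
      ∫ ω in Aᶜ, (K - f b ω) ∂μ = K * (μ.real univ - μ.real A) - ∫ ω in Aᶜ, f b ω ∂μ := by
    rw [integral_sub (integrable_const K) (hf.integrable b).integrableOn, setIntegral_const,
      measureReal_compl hA, smul_eq_mul, mul_comm]
  have real_bound : (c - K) * μ.real A ≤ ∫ ω in Aᶜ, (K - f b ω) ∂μ := by
    linarith [supermartingale_maximal_ineq_finset hf hab hF c]
  rw [ENNReal.le_div_iff_mul_le (Or.inl (by simpa using hKc)) (Or.inl ENNReal.ofReal_ne_top),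
    mul_comm]
  calc ENNReal.ofReal (c - K) * μ A
      = ENNReal.ofReal ((c - K) * μ.real A) := by
        rw [ENNReal.ofReal_mul (sub_nonneg.2 hKc.le), ofReal_measureReal (measure_ne_top μ A)]
    _ ≤ ENNReal.ofReal (∫ ω in Aᶜ, (K - f b ω) ∂μ) := ENNReal.ofReal_le_ofReal real_bound
    _ ≤ ∫⁻ ω in Aᶜ, ENNReal.ofReal (K - f b ω) ∂μ := ofReal_integral_le_lintegral_ofReal _
    _ ≤ ∫⁻ ω, ENNReal.ofReal (K - f b ω) ∂μ := setLIntegral_le_lintegral _ _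

theorem supermartingale_measure_exists_mem_Icc_lt_le [TopologicalSpace ι] [OrderTopology ι]
    [DenselyOrdered ι] [TopologicalSpace.SeparableSpace ι] (hf : Supermartingale f ℱ μ)
    (hf_path : ∀ᵐ ω ∂μ, ∀ t ∈ Ico a b, LowerSemicontinuousWithinAt (f · ω) (Ioi t) t)
    (hfa : ∫ ω, f a ω ∂μ ≤ K * μ.real univ) (hKc : K < c) (hab : a ≤ b) :
    μ {ω | ∃ t ∈ Icc a b, c < f t ω}
      ≤ (∫⁻ ω, ENNReal.ofReal (K - f b ω) ∂μ) / ENNReal.ofReal (c - K) := by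
  obtain ⟨D, hD_countable, hD⟩ := TopologicalSpace.exists_countable_dense ι
  set S := insert b (D ∩ Icc a b)
  have hS : S.Countable := (hD_countable.mono inter_subset_left).insert b
  have hSab : S ⊆ Icc a b := insert_subset (right_mem_Icc.2 hab) inter_subset_right
  calc μ {ω | ∃ t ∈ Icc a b, c < f t ω}
      ≤ μ (⋃ t ∈ S, {ω | c < f t ω}) := by
        refine measure_mono_ae ?_
        filter_upwards [hf_path] with ω hω hc
        obtain ⟨s, hsS, hcs⟩ := exists_mem_insert_dense_lt_of_exists_mem_Icc hD hω hc
        exact mem_iUnion₂_of_mem hsS hcs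
    _ ≤ _ := measure_biUnion_le_of_forall_finset hS fun F hFS =>
        supermartingale_measure_biUnion_finset_lt_le hf hfa hKc hab fun i hi => hSab (hFS hi)

end MaximalInequality

/-- The filtration `ℱ` observed along the monotone time change `u`; restricting `ℱ` to a set of
times is the case where `u` is the inclusion. -/
def reindexFiltration {ι κ : Type*} [Preorder ι] [Preorder κ] (ℱ : Filtration ι m0) (u : κ →o ι) :
    Filtration κ m0 where
  seq t := ℱ (u t)
  mono' _ _ hst := ℱ.mono (u.monotone hst)
  le' t := ℱ.le (u t)

lemma SupermartingaleOn.supermartingale_restrict {Q : Measure Ω} {ℱ : Filtration ℝ m0} {T : ℝ}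
    {Z : ℝ → Ω → ℝ} (hZ : SupermartingaleOn Q ℱ T Z) :
    Supermartingale (fun t : Icc 0 T => Z t)
      (reindexFiltration ℱ (OrderHom.Subtype.val (· ∈ Icc 0 T))) Q :=
  ⟨fun t => (hZ.1 t t.2).stronglyMeasurable, fun s t hst => hZ.2.2 s t s.2.1 hst t.2.2,
    fun t => hZ.2.1 t t.2⟩

lemma CadlagOn.lowerSemicontinuousWithinAt_restrict {T : ℝ} {x : ℝ → ℝ} (hx : CadlagOn T x)
    {t : Icc 0 T} (ht : (t : ℝ) < T) :
    LowerSemicontinuousWithinAt (fun s : Icc 0 T => x s) (Ioi t) t :=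
  have hright : MapsTo Subtype.val (Ioi t) (Ici (t : ℝ)) := fun _ hs => (mem_Ioi.1 hs).le
  ((hx.1 t ⟨t.2.1, ht⟩).comp continuous_subtype_val.continuousWithinAt
    hright).lowerSemicontinuousWithinAt

theorem supermartingale_sup_convergence_general {ι κ : Type*} [LinearOrder ι] [TopologicalSpace ι]
    [OrderTopology ι] [DenselyOrdered ι] [TopologicalSpace.SeparableSpace ι]
    {μ : Measure Ω} [IsFiniteMeasure μ] {ℱ : κ → Filtration ι m0} {f : κ → ι → Ω → ℝ}
    {l : Filter κ} {a b : ι} (hab : a ≤ b) {K : ℝ}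
    (hf : ∀ n, Supermartingale (f n) (ℱ n) μ)
    (hf_path : ∀ n, ∀ᵐ ω ∂μ, ∀ t ∈ Ico a b, LowerSemicontinuousWithinAt (f n · ω) (Ioi t) t)
    (hfa : ∀ n, ∫ ω, f n a ω ∂μ ≤ K * μ.real univ) (hfb_nonneg : ∀ n, ∀ᵐ ω ∂μ, 0 ≤ f n b ω)
    (hfb : TendstoInMeasure μ (fun n => f n b) l fun _ => K) {ε : ℝ} (hε : 0 < ε) :
    Tendsto (fun n => μ {ω | ∃ t ∈ Icc a b, K + ε < f n t ω}) l (𝓝 0) := by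
  have bound (n : κ) : μ {ω | ∃ t ∈ Icc a b, K + ε < f n t ω}
      ≤ (∫⁻ ω, ENNReal.ofReal (K - f n b ω) ∂μ) / ENNReal.ofReal ε := by
    simpa using supermartingale_measure_exists_mem_Icc_lt_le (hf n) (hf_path n) (hfa n)
      (lt_add_of_pos_right K hε) hab
  have bound_tendsto :
      Tendsto (fun n => (∫⁻ ω, ENNReal.ofReal (K - f n b ω) ∂μ) / ENNReal.ofReal ε) l (𝓝 0) := by
    simpa using ENNReal.Tendsto.div_const
      (tendsto_lintegral_ofReal_sub_of_tendstoInMeasure hfb_nonneg hfb)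
      (Or.inr (ENNReal.ofReal_pos.2 hε).ne')
  exact tendsto_of_tendsto_of_tendsto_of_le_of_le tendsto_const_nhds bound_tendsto
    (fun _ => zero_le) bound

theorem supermartingale_sup_convergence
    {Ω : Type*} {m0 : MeasurableSpace Ω} (P : Measure Ω) [IsProbabilityMeasure P]
    (ℱ : Filtration ℝ m0) (T : ℝ) (hT : 0 < T)
    (hF_rightCont : ∀ t : ℝ, ℱ t = ⨅ s ∈ Set.Ioi t, ℱ s)
    (hF_complete : ∀ (t : ℝ) (A : Set Ω), P A = 0 → MeasurableSet[ℱ t] A)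
    (Z : ℕ → ℝ → Ω → ℝ)
    (hZ_proc : ∀ n, IsProcess P ℱ T (Z n))
    (hZ_sup : ∀ n, SupermartingaleOn P ℱ T (Z n))
    (hZ0 : ∀ n, ∀ᵐ ω ∂P, Z n 0 ω ≤ 1)
    (hZT : TendstoInMeasure P (fun n => Z n T) Filter.atTop (fun _ => (1:ℝ)))
    :
    ∀ ε : ℝ, 0 < ε →
      Filter.Tendsto (fun n => P {ω | ∃ t ∈ Set.Icc (0:ℝ) T, 1 + ε < Z n t ω})
        Filter.atTop (nhds 0) := by
  intro ε hε
  let start : Icc 0 T := ⟨0, left_mem_Icc.2 hT.le⟩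
  let finish : Icc 0 T := ⟨T, right_mem_Icc.2 hT.le⟩
  have hZ_mean (n : ℕ) : ∫ ω, Z n 0 ω ∂P ≤ 1 * P.real univ := by
    simpa using integral_mono_ae ((hZ_sup n).2.1 0 start.2) (integrable_const 1) (hZ0 n)
  have convergence := supermartingale_sup_convergence_general (a := start) (b := finish) hT.le
    (fun n => (hZ_sup n).supermartingale_restrict)
    (fun n => (hZ_proc n).cadlag.mono fun ω hω t ht => hω.lowerSemicontinuousWithinAt_restrict ht.2)
    hZ_mean (fun n => (hZ_proc n).nonneg.mono fun ω hω => hω T finish.2) hZT hε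
  refine convergence.congr fun n => congrArg P (Set.ext fun ω => ?_)
  exact ⟨fun ⟨t, _, hlt⟩ => ⟨t, t.2, hlt⟩, fun ⟨t, ht, hlt⟩ => ⟨⟨t, ht⟩, ht, hlt⟩⟩

end WPS
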